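/- arXiv:2508.18644 — 9 statements merged into one kernel-verified Lean document; each statement's English description precedes it below -/
import Mathlib

section
/- Let A = [[A₁,A₂],[A₃,A₄]] be a block complex matrix with A₁ of size c×d, A₂ of size c×(b−d), A₃ of size (a−c)×d, and A₄ of size (a−c)×(b−d). Then rank A = rank A₁ if and only if the column space of A equals the column space of the (a×d) vertical stack [A₁;A₃] and the column space of A₃ᵀ is contained in the column space of A₁ᵀ. -/
open Matrix

/-!
Passing from `A₁` to the stack `S = [A₁; A₃]` and then to `A = [S, *]` can only enlarge the rank, so
`rank A = rank A₁` iff neither step does. Adjoining columns enlarges the column space, by a sup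
(`range_fromCols`), hence preserves the rank iff it preserves the column space
(`rank_fromCols_eq_iff`). Applied to `A` this gives the condition on column spaces; applied to
`Sᵀ = [A₁ᵀ, A₃ᵀ]` it says that the range of `A₃ᵀ` lies in that of `A₁ᵀ`.
-/

section
variable {K m n₁ n₂ : Type*} [Field K] [Fintype n₁] [Fintype n₂]

theorem range_fromCols (P : Matrix m n₁ K) (Q : Matrix m n₂ K) :
    LinearMap.range (fromCols P Q).mulVecLin
      = LinearMap.range P.mulVecLin ⊔ LinearMap.range Q.mulVecLin := by
  have hcol : (fromCols P Q).col = Sum.elim P.col Q.col := by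
    ext (i | i) j <;> rfl
  rw [range_mulVecLin, range_mulVecLin, range_mulVecLin, hcol, Set.Sum.elim_range,
    Submodule.span_union]

theorem rank_le_rank_fromCols [Finite m] (P : Matrix m n₁ K) (Q : Matrix m n₂ K) :
    P.rank ≤ (fromCols P Q).rank :=
  Submodule.finrank_mono (range_fromCols P Q ▸ le_sup_left)

theorem rank_fromCols_eq_iff [Finite m] (P : Matrix m n₁ K) (Q : Matrix m n₂ K) :
    (fromCols P Q).rank = P.rank ↔
      LinearMap.range (fromCols P Q).mulVecLin = LinearMap.range P.mulVecLin := by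
  refine ⟨fun h => ?_, fun h => by rw [Matrix.rank, h, Matrix.rank]⟩
  exact (Submodule.eq_of_le_of_finrank_eq (range_fromCols P Q ▸ le_sup_left) h.symm).symm

end

theorem stmt3 (a b c d : ℕ) (hc : c ≤ a) (hd : d ≤ b)
    (A₁ : Matrix (Fin c) (Fin d) ℂ) (A₂ : Matrix (Fin c) (Fin (b - d)) ℂ)
    (A₃ : Matrix (Fin (a - c)) (Fin d) ℂ) (A₄ : Matrix (Fin (a - c)) (Fin (b - d)) ℂ) :
    (Matrix.fromBlocks A₁ A₂ A₃ A₄).rank = A₁.rank ↔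
      (LinearMap.range (Matrix.fromBlocks A₁ A₂ A₃ A₄).mulVecLin
          = LinearMap.range (Matrix.fromRows A₁ A₃).mulVecLin ∧
        LinearMap.range A₃ᵀ.mulVecLin ≤ LinearMap.range A₁ᵀ.mulVecLin) := by
  have hS : (fromRows A₁ A₃).rank = (fromCols A₁ᵀ A₃ᵀ).rank := by
    rw [← rank_transpose, transpose_fromRows]
  have h₁ : A₁.rank ≤ (fromRows A₁ A₃).rank := by
    rw [hS, ← rank_transpose A₁]
    exact rank_le_rank_fromCols _ _
  have h₂ := rank_le_rank_fromCols (fromRows A₁ A₃) (fromRows A₂ A₄)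
  have h₃ : (fromRows A₁ A₃).rank = A₁.rank ↔
      LinearMap.range A₃ᵀ.mulVecLin ≤ LinearMap.range A₁ᵀ.mulVecLin := by
    rw [hS, ← rank_transpose A₁, rank_fromCols_eq_iff, range_fromCols, sup_eq_left]
  rw [← fromCols_fromRows_eq_fromBlocks, ← rank_fromCols_eq_iff, ← h₃]
  omega
end

section
/- Let R₁,…,R_K be linearly independent m₁×n₁ complex matrices and S₁,…,S_K be linearly independent m₂×n₂ complex matrices, and suppose X = Σ_{i=1}^K Rᵢ ⊗ Sᵢ is nonzero. If rank(Σ_{i=1}^K Rᵢ ⊗ Sᵢᵀ) = K · rank X, then K ≤ min(m₁n₂, m₂n₁). -/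
open Matrix Kronecker

-- The matrix `∑ Rᵢ ⊗ Sᵢᵀ` has `m₁ n₂` rows and `n₁ m₂` columns, so its rank `K · rank X` is at most
-- either number; and `rank X ≥ 1` because `X ≠ 0`.
theorem stmt5 (K m₁ n₁ m₂ n₂ : ℕ)
    (R : Fin K → Matrix (Fin m₁) (Fin n₁) ℂ)
    (S : Fin K → Matrix (Fin m₂) (Fin n₂) ℂ)
    (hR : LinearIndependent ℂ R) (hS : LinearIndependent ℂ S)
    (hX : (∑ i, R i ⊗ₖ S i) ≠ 0)
    (h : (∑ i, R i ⊗ₖ (S i)ᵀ).rank = K * (∑ i, R i ⊗ₖ S i).rank) :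
    K ≤ min (m₁ * n₂) (m₂ * n₁) := by
  have hpos : 0 < (∑ i, R i ⊗ₖ S i).rank :=
    Nat.pos_of_ne_zero fun h0 => hX (by
      rw [Matrix.rank, Submodule.finrank_eq_zero, LinearMap.range_eq_bot] at h0
      exact Matrix.mulVec_injective (funext fun v =>
        (LinearMap.congr_fun h0 v).trans (Matrix.zero_mulVec v).symm))
  have hK : K ≤ (∑ i, R i ⊗ₖ (S i)ᵀ).rank := h ▸ Nat.le_mul_of_pos_right K hpos
  have hrow := (∑ i, R i ⊗ₖ (S i)ᵀ).rank_le_card_height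
  have hcol := (∑ i, R i ⊗ₖ (S i)ᵀ).rank_le_card_width
  simp only [Fintype.card_prod, Fintype.card_fin] at hrow hcol
  exact le_min (hK.trans hrow) (hK.trans (hcol.trans_eq (Nat.mul_comm _ _)))
end

section
/- Let R₁,…,R_K ∈ ℂ^{m₁} be linearly independent column vectors, viewed as m₁×1 matrices (so K ≤ m₁), and let S₁,…,S_K be m₂×n₂ complex matrices. Then rank(Σ_{i=1}^K Rᵢ ⊗ Sᵢ) equals the rank of the (K·m₂)×n₂ vertical stack [S₁;S₂;…;S_K]. -/
/-!
The two matrices have the same kernel, once the column index `Fin 1 × Fin n₂` of the left one is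
identified with `Fin n₂`. Indeed `(∑ i, R i ⊗ₖ S i) x` vanishes iff for each row `k` the combination
`∑ i, (S i x) k • R i` is zero, which by linear independence of the `R i` means that every `S i x`
vanishes. Rank–nullity then gives equal ranks.
-/

open Matrix Kronecker

/-- Matrices with the same number of columns and the same kernel have the same rank. -/
lemma rank_eq_of_mulVec_eq_zero_iff {a b n : Type*} [Fintype n]
    (A : Matrix a n ℂ) (B : Matrix b n ℂ)
    (h : ∀ x, A *ᵥ x = 0 ↔ B *ᵥ x = 0) : A.rank = B.rank := by
  have hker : LinearMap.ker A.mulVecLin = LinearMap.ker B.mulVecLin := by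
    ext x
    simpa using h x
  have hA := A.mulVecLin.finrank_range_add_finrank_ker
  have hB := B.mulVecLin.finrank_range_add_finrank_ker
  rw [hker] at hA
  unfold Matrix.rank
  omega

theorem stmt6 (K m₁ m₂ n₂ : ℕ)
    (R : Fin K → Matrix (Fin m₁) (Fin 1) ℂ)
    (hR : LinearIndependent ℂ R)
    (S : Fin K → Matrix (Fin m₂) (Fin n₂) ℂ) :
    (∑ i, R i ⊗ₖ S i).rank
      = (Matrix.of fun (p : Fin K × Fin m₂) (j : Fin n₂) => S p.1 p.2 j).rank := by
  rw [← rank_submatrix (∑ i, R i ⊗ₖ S i) (Equiv.refl _) (Equiv.uniqueProd (Fin n₂) (Fin 1)).symm]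
  apply rank_eq_of_mulVec_eq_zero_iff
  intro x
  have key : ∀ (a : Fin m₁) (k : Fin m₂),
      (((∑ i, R i ⊗ₖ S i).submatrix (Equiv.refl _)
        (Equiv.uniqueProd (Fin n₂) (Fin 1)).symm) *ᵥ x) (a, k)
        = ∑ i, (S i *ᵥ x) k * R i a 0 := by
    intro a k
    simp only [mulVec, dotProduct, submatrix_apply, Matrix.sum_apply, kroneckerMap_apply,
      Finset.sum_mul, Equiv.refl_apply, Equiv.uniqueProd_symm_apply, Fin.default_eq_zero]
    rw [Finset.sum_comm]
    refine Finset.sum_congr rfl fun i _ => Finset.sum_congr rfl fun j _ => ?_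
    ring
  constructor
  · intro h
    ext ⟨i, k⟩
    have hz : ∑ i, (S i *ᵥ x) k • R i = 0 := by
      ext a b
      have := congrFun h (a, k)
      rw [key] at this
      simpa [Matrix.sum_apply, Subsingleton.elim b 0] using this
    exact Fintype.linearIndependent_iff.1 hR _ hz i
  · intro h
    ext ⟨a, k⟩
    rw [key]
    refine Finset.sum_eq_zero fun i _ => ?_
    have : (S i *ᵥ x) k = 0 := congrFun h (i, k)
    rw [this, zero_mul]
end

section
/- Let R₁,…,R_K ∈ ℂ^{m₁} be linearly independent column vectors, viewed as m₁×1 matrices, and let S₁,…,S_K be linearly independent m₂×n₂ complex matrices. Then rank(Σ_{i=1}^K Rᵢ ⊗ Sᵢᵀ) = K · rank(Σ_{i=1}^K Rᵢ ⊗ Sᵢ) if and only if the rank of the m₂×(K·n₂) horizontal concatenation [S₁ S₂ … S_K] equals K times the rank of the (K·m₂)×n₂ vertical stack [S₁;S₂;…;S_K]. -/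
/-! Collecting the vectors `R i` as the columns of a matrix `C`, the sum `∑ i, R i ⊗ₖ T i` is
`(C ⊗ₖ 1) * [T₁; …; T_K]` up to reindexing the columns by the trivial factor `Fin 1`. Independence
of the `R i` gives `C` a left inverse, so `C ⊗ₖ 1` has one too and left multiplication by it
preserves rank: the sum has the rank of the vertical stack of the `T i` (`rank_sum_kronecker`).
For `T = S` this is the vertical stack in the statement, and for `T i = (S i)ᵀ` it is the transpose
of the horizontal concatenation. -/

open Matrix Kronecker

/-- A sum of Kronecker products with linearly independent column vectors has the rank of the
vertical stack of the second factors. -/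
theorem rank_sum_kronecker {K m a b : ℕ} (R : Fin K → Matrix (Fin m) (Fin 1) ℂ)
    (hR : LinearIndependent ℂ R) (T : Fin K → Matrix (Fin a) (Fin b) ℂ) :
    (∑ i, R i ⊗ₖ T i).rank =
      (Matrix.of fun (p : Fin K × Fin a) (j : Fin b) => T p.1 p.2 j).rank := by
  set C : Matrix (Fin m) (Fin K) ℂ := Matrix.of fun i p => R p i 0 with hC
  set V : Matrix (Fin K × Fin a) (Fin b) ℂ := Matrix.of fun p j => T p.1 p.2 j with hV
  have hinj : Function.Injective C.mulVec := by
    rw [Matrix.mulVec_injective_iff, Fintype.linearIndependent_iff]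
    rw [Fintype.linearIndependent_iff] at hR
    intro g hg
    refine hR g ?_
    ext i j
    have h := congrFun hg i
    rw [Subsingleton.elim j 0]
    simpa [Matrix.sum_apply, hC] using h
  obtain ⟨L, hL⟩ : ∃ L : Matrix (Fin K) (Fin m) ℂ, L * C = 1 := by
    obtain ⟨g, hg⟩ := (Matrix.toLin' C).exists_leftInverse_of_injective
      (LinearMap.ker_eq_bot.mpr hinj)
    refine ⟨LinearMap.toMatrix' g, ?_⟩
    simpa [LinearMap.toMatrix'_comp] using congrArg LinearMap.toMatrix' hg
  have hfac : (∑ i, R i ⊗ₖ T i) =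
      ((C ⊗ₖ (1 : Matrix (Fin a) (Fin a) ℂ)) * V).submatrix
        (Equiv.refl _) (Equiv.uniqueProd (Fin b) (Fin 1)) := by
    ext ⟨i, k⟩ ⟨z, l⟩
    rw [Subsingleton.elim z 0]
    simp [Matrix.sum_apply, Matrix.mul_apply, Fintype.sum_prod_type, Matrix.one_apply, hC, hV]
  rw [hfac, Matrix.rank_submatrix]
  apply le_antisymm (Matrix.rank_mul_le_right _ _)
  calc V.rank = ((L ⊗ₖ (1 : Matrix (Fin a) (Fin a) ℂ)) * ((C ⊗ₖ (1 : Matrix (Fin a) (Fin a) ℂ)) * V)).rank := by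
        rw [← Matrix.mul_assoc, ← Matrix.mul_kronecker_mul, hL]
        simp
    _ ≤ _ := Matrix.rank_mul_le_right _ _

theorem stmt7 (K m₁ m₂ n₂ : ℕ)
    (R : Fin K → Matrix (Fin m₁) (Fin 1) ℂ)
    (hR : LinearIndependent ℂ R)
    (S : Fin K → Matrix (Fin m₂) (Fin n₂) ℂ)
    (hS : LinearIndependent ℂ S) :
    (∑ i, R i ⊗ₖ (S i)ᵀ).rank = K * (∑ i, R i ⊗ₖ S i).rank ↔
      (Matrix.of fun (r : Fin m₂) (p : Fin K × Fin n₂) => S p.1 r p.2).rank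
        = K * (Matrix.of fun (p : Fin K × Fin m₂) (j : Fin n₂) => S p.1 p.2 j).rank := by
  rw [rank_sum_kronecker R hR S, rank_sum_kronecker R hR (fun i => (S i)ᵀ),
    ← Matrix.rank_transpose (Matrix.of fun (r : Fin m₂) (p : Fin K × Fin n₂) => S p.1 r p.2)]
  rfl
end

section
/- Let R₁,R₂,R₃,R₄ ∈ M₂(ℂ) be linearly independent and S₁,S₂,S₃,S₄ ∈ M₂(ℂ) be linearly independent. Then rank(Σ_{i=1}^4 Rᵢ ⊗ Sᵢᵀ) = 4 · rank(Σ_{i=1}^4 Rᵢ ⊗ Sᵢ) if and only if rank(Σ_{i=1}^4 Rᵢ ⊗ Sᵢ) = 1. -/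
/-!
Write `M = ∑ Rᵢ ⊗ Sᵢ` and `Γ = ∑ Rᵢ ⊗ Sᵢᵀ`. Since `Γ` is a `4 × 4` matrix, `rank Γ = 4 · rank M`
forces `rank M ≤ 1`, so everything follows from the single fact `rank M ≤ 1 → rank Γ = 4`
(which also excludes `rank M = 0`).

If `rank M ≤ 1`, then `M = x yᵀ`; regard the vectors `x, y` on `Fin 2 × Fin 2` as `2 × 2` matrices
`X, Y`. The realignment `M[(i,k),(j,l)] ↦ Q[(i,j),(k,l)]` turns `M` into `Q = X ⊗ Y`, while from
`M = ∑ Rᵢ ⊗ Sᵢ` it is `∑ vec(Rᵢ) vec(Sᵢ)ᵀ`, a product of two invertible matrices by linear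
independence. Hence `det X` and `det Y` are nonzero. Finally `Γ` is `X ⊗ Yᵀ` with its columns
permuted, so it has full rank.
-/

open Matrix Kronecker

theorem exists_eq_vecMulVec_of_rank_le_one {m n : Type*} [Fintype m] [Fintype n]
    (A : Matrix m n ℂ) (h : A.rank ≤ 1) : ∃ x y, A = vecMulVec x y := by
  rw [rank_eq_finrank_span_cols, Submodule.finrank_le_one_iff_isPrincipal] at h
  obtain ⟨x, hx⟩ := h
  have hcol : ∀ j, ∃ c : ℂ, c • x = A.col j := fun j => by
    rw [← Submodule.mem_span_singleton, ← hx]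
    exact Submodule.subset_span ⟨j, rfl⟩
  choose y hy using hcol
  refine ⟨x, y, ?_⟩
  ext i j
  have := congrFun (hy j) i
  simp only [Pi.smul_apply, smul_eq_mul, col_apply] at this
  rw [vecMulVec_apply, ← this, mul_comm]

/-- The square matrix whose row `p` is the vectorization of the matrix `R (finProdFinEquiv p)`;
the family is reindexed by `Fin 2 × Fin 2` so that rows and columns share an index type. -/
def vecRows (R : Fin 4 → Matrix (Fin 2) (Fin 2) ℂ) :
    Matrix (Fin 2 × Fin 2) (Fin 2 × Fin 2) ℂ :=
  fun p q => R (finProdFinEquiv p) q.1 q.2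

theorem det_vecRows_ne_zero (R : Fin 4 → Matrix (Fin 2) (Fin 2) ℂ)
    (hR : LinearIndependent ℂ R) : (vecRows R).det ≠ 0 := by
  rw [← isUnit_iff_ne_zero, ← isUnit_iff_isUnit_det, ← linearIndependent_rows_iff_isUnit]
  have h := hR.comp (finProdFinEquiv (m := 2) (n := 2)) finProdFinEquiv.injective
  rw [Fintype.linearIndependent_iff] at h ⊢
  intro g hg
  refine h g ?_
  ext a b
  have := congrFun hg (a, b)
  simpa [vecRows, Matrix.sum_apply, Finset.sum_apply] using this

theorem rank_partialTranspose_eq_four (R S : Fin 4 → Matrix (Fin 2) (Fin 2) ℂ)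
    (hR : LinearIndependent ℂ R) (hS : LinearIndependent ℂ S)
    (h : (∑ i, R i ⊗ₖ S i).rank ≤ 1) : (∑ i, R i ⊗ₖ (S i)ᵀ).rank = 4 := by
  obtain ⟨x, y, hxy⟩ := exists_eq_vecMulVec_of_rank_le_one _ h
  let X : Matrix (Fin 2) (Fin 2) ℂ := fun a b => x (a, b)
  let Y : Matrix (Fin 2) (Fin 2) ℂ := fun a b => y (a, b)
  have hent : ∀ a b c d, ∑ i, R i a b * S i c d = X a c * Y b d := fun a b c d => by
    have := congrFun (congrFun hxy (a, c)) (b, d)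
    simpa [Matrix.sum_apply, vecMulVec_apply, X, Y] using this
  have hQ : (vecRows R)ᵀ * vecRows S = X ⊗ₖ Y := by
    ext ⟨a, b⟩ ⟨c, d⟩
    have h1 : ∑ p : Fin 2 × Fin 2, R (finProdFinEquiv p) a b * S (finProdFinEquiv p) c d
        = ∑ i, R i a b * S i c d :=
      Equiv.sum_comp (finProdFinEquiv (m := 2) (n := 2)) fun i => R i a b * S i c d
    simpa [mul_apply, vecRows] using h1.trans (hent a b c d)
  have hdet := congrArg det hQ
  rw [det_mul, det_transpose, det_kronecker] at hdet
  have hne := mul_ne_zero (det_vecRows_ne_zero R hR) (det_vecRows_ne_zero S hS)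
  rw [hdet] at hne
  have hΓ : (∑ i, R i ⊗ₖ (S i)ᵀ) =
      (X ⊗ₖ Yᵀ).submatrix (Equiv.refl _) (Equiv.prodComm (Fin 2) (Fin 2)) := by
    ext ⟨a, c⟩ ⟨b, d⟩
    simpa [Matrix.sum_apply] using hent a b d c
  rw [hΓ, rank_submatrix, rank_of_det_ne_zero]
  · simp
  · rwa [det_kronecker, det_transpose]

theorem stmt10 (R S : Fin 4 → Matrix (Fin 2) (Fin 2) ℂ)
    (hR : LinearIndependent ℂ R) (hS : LinearIndependent ℂ S) :
    (∑ i, R i ⊗ₖ (S i)ᵀ).rank = 4 * (∑ i, R i ⊗ₖ S i).rank ↔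
      (∑ i, R i ⊗ₖ S i).rank = 1 := by
  have key := rank_partialTranspose_eq_four R S hR hS
  have hle : (∑ i, R i ⊗ₖ (S i)ᵀ).rank ≤ 4 := by
    simpa using rank_le_card_height (∑ i, R i ⊗ₖ (S i)ᵀ)
  constructor
  · intro h
    have := key (by omega)
    omega
  · intro h
    have := key h.le
    omega
end

section
/- Let R₁,R₂,R₃ ∈ M₂(ℂ) be linearly independent and S₁,S₂,S₃ be linearly independent m₂×n₂ complex matrices. Then rank(Σ_{i=1}^3 Rᵢ ⊗ Sᵢᵀ) < 3 · rank(Σ_{i=1}^3 Rᵢ ⊗ Sᵢ); that is, for Schmidt rank three the inequality rank(Σ Rᵢ⊗Sᵢᵀ) ≤ 3·rank(Σ Rᵢ⊗Sᵢ) is always strict. -/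
open Matrix Kronecker

/-!
The linear forms on `M₂(ℂ)` form a space of dimension four, so some nonzero `Y` satisfies
`∑ a b, Y a b * R i a b = 0` for `i = 0, 1, 2`. Replacing every `R i` by `P * R i * Q` with `P`, `Q`
invertible changes neither of the two ranks, which leaves two normal forms.

* `Y` invertible: after such a change all `R i` are symmetric. Then `∑ R i ⊗ (S i)ᵀ` is the
  transpose of `∑ R i ⊗ S i`, the two ranks are equal, and they are positive.
* `Y` of rank one: after such a change all `R i` have lower right entry zero. Then
  `∑ R i ⊗ S i = [[A, B], [C, 0]]` and `∑ R i ⊗ (S i)ᵀ = [[Aᵀ, Bᵀ], [Cᵀ, 0]]`. The second matrix has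
  rank at most `rank A + rank B + rank C`. The first has rank `r` with `rank A ≤ r`
  (a submatrix) and `rank B + rank C ≤ r` (`rank_blocks_add_le`), so the second rank is at most
  `2 * r < 3 * r`.
-/

/-- If the lower right block of a `2 × 2` block matrix vanishes, the ranks of the two off-diagonal
blocks add up to at most the rank of the matrix: projecting the column space to the lower component
has an image containing the columns of the lower left block, and a kernel containing the columns of
the upper right block. -/
lemma rank_blocks_add_le {m n : ℕ} (M : Matrix (Fin 2 × Fin m) (Fin 2 × Fin n) ℂ)
    (h : ∀ k l, M (1, k) (1, l) = 0) :
    (M.submatrix (fun k => ((0 : Fin 2), k)) (fun l => ((1 : Fin 2), l))).rank +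
      (M.submatrix (fun k => ((1 : Fin 2), k)) (fun l => ((0 : Fin 2), l))).rank ≤ M.rank := by
  set B := M.submatrix (fun k => ((0 : Fin 2), k)) (fun l => ((1 : Fin 2), l)) with hB
  set C := M.submatrix (fun k => ((1 : Fin 2), k)) (fun l => ((0 : Fin 2), l)) with hC
  let L := LinearMap.range M.mulVecLin
  let p : (Fin 2 × Fin m → ℂ) →ₗ[ℂ] (Fin m → ℂ) := LinearMap.funLeft ℂ ℂ (fun k => ((1 : Fin 2), k))
  let e : (Fin m → ℂ) →ₗ[ℂ] (Fin 2 × Fin m → ℂ) :=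
    { toFun := fun v x => if x.1 = 0 then v x.2 else 0
      map_add' := by intro v w; ext x; by_cases hx : x.1 = 0 <;> simp [hx]
      map_smul' := by intro c v; ext x; by_cases hx : x.1 = 0 <;> simp [hx] }
  have he : Function.Injective e := by
    intro v w hvw
    ext k
    simpa [e] using congrFun hvw ((0 : Fin 2), k)
  let f := p.domRestrict L
  have key := LinearMap.finrank_range_add_finrank_ker f
  have h1 : C.rank ≤ Module.finrank ℂ (LinearMap.range f) := by
    apply Submodule.finrank_mono
    rintro _ ⟨v, rfl⟩
    refine ⟨⟨M.mulVecLin (fun x => if x.1 = 0 then v x.2 else 0), ⟨_, rfl⟩⟩, ?_⟩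
    ext k
    simp [f, p, LinearMap.funLeft, hC, Matrix.mulVec, dotProduct, Fintype.sum_prod_type]
  have h2 : B.rank ≤ Module.finrank ℂ (LinearMap.ker f) := by
    have : B.rank = Module.finrank ℂ ((LinearMap.range B.mulVecLin).map e) :=
      (LinearEquiv.finrank_eq (Submodule.equivMapOfInjective e he _))
    rw [this, ← Submodule.finrank_map_subtype_eq L (LinearMap.ker f)]
    apply Submodule.finrank_mono
    rintro _ ⟨_, ⟨v, rfl⟩, rfl⟩
    have hv : M.mulVecLin (fun x => if x.1 = 1 then v x.2 else 0) = e (B.mulVecLin v) := by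
      ext ⟨i, k⟩
      fin_cases i <;>
        simp [e, hB, Matrix.mulVec, dotProduct, Fintype.sum_prod_type, h]
    refine ⟨⟨e (B.mulVecLin v), ⟨_, hv⟩⟩, ?_, rfl⟩
    simp only [SetLike.mem_coe, LinearMap.mem_ker]
    ext k
    simp [f, p, LinearMap.funLeft, e]
  change _ ≤ Module.finrank ℂ L
  omega

lemma rank_add_le_rank_add_rank {m n : Type*} [Fintype m] [Fintype n] (A B : Matrix m n ℂ) :
    (A + B).rank ≤ A.rank + B.rank := by
  refine le_trans ?_ (Submodule.finrank_add_le_finrank_add_finrank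
    (LinearMap.range A.mulVecLin) (LinearMap.range B.mulVecLin))
  apply Submodule.finrank_mono
  rintro _ ⟨v, rfl⟩
  rw [Matrix.mulVecLin_add]
  exact Submodule.add_mem_sup ⟨v, rfl⟩ ⟨v, rfl⟩

lemma rank_single_kronecker_le {m n : ℕ} (a b : Fin 2) (T : Matrix (Fin m) (Fin n) ℂ) :
    (Matrix.single a b (1 : ℂ) ⊗ₖ T).rank ≤ T.rank := by
  have : Matrix.single a b (1 : ℂ) ⊗ₖ T =
      (Matrix.of fun x k => if x.1 = a then (1 : Matrix _ _ ℂ) x.2 k else 0 :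
          Matrix (Fin 2 × Fin m) (Fin m) ℂ) * T *
        (Matrix.of fun l y => if y.1 = b then (1 : Matrix _ _ ℂ) l y.2 else 0 :
          Matrix (Fin n) (Fin 2 × Fin n) ℂ) := by
    ext ⟨i, k⟩ ⟨j, l⟩
    by_cases hi : i = a <;> by_cases hj : j = b <;>
      simp [Matrix.mul_apply, Matrix.one_apply, hi, hj, eq_comm (a := a), eq_comm (a := b)]
  rw [this]
  exact (Matrix.rank_mul_le_left _ _).trans (Matrix.rank_mul_le_right _ _)

/-- Multiplying the left tensor factors by invertible matrices on both sides preserves the rank. -/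
lemma rank_sum_conj {m n : ℕ} (R : Fin 3 → Matrix (Fin 2) (Fin 2) ℂ)
    (S : Fin 3 → Matrix (Fin m) (Fin n) ℂ) (P Q : Matrix (Fin 2) (Fin 2) ℂ)
    (hP : P.det ≠ 0) (hQ : Q.det ≠ 0) :
    (∑ i, (P * R i * Q) ⊗ₖ S i).rank = (∑ i, R i ⊗ₖ S i).rank := by
  have : ∑ i, (P * R i * Q) ⊗ₖ S i =
      (P ⊗ₖ (1 : Matrix (Fin m) (Fin m) ℂ)) * (∑ i, R i ⊗ₖ S i) *
        (Q ⊗ₖ (1 : Matrix (Fin n) (Fin n) ℂ)) := by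
    simp [Matrix.mul_sum, Matrix.sum_mul, ← Matrix.mul_kronecker_mul]
  rw [this, Matrix.rank_mul_eq_left_of_det_ne_zero, Matrix.rank_mul_eq_right_of_det_ne_zero]
  · simp [Matrix.det_kronecker, hP]
  · simp [Matrix.det_kronecker, hQ]

lemma rank_sum_pos {m n : ℕ} (R : Fin 3 → Matrix (Fin 2) (Fin 2) ℂ)
    (S : Fin 3 → Matrix (Fin m) (Fin n) ℂ)
    (hR : LinearIndependent ℂ R) (hS : LinearIndependent ℂ S) :
    0 < (∑ i, R i ⊗ₖ S i).rank := by
  rw [Nat.pos_iff_ne_zero]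
  intro h0
  have hM : ∑ i, R i ⊗ₖ S i = 0 := by
    have h1 : LinearMap.range (∑ i, R i ⊗ₖ S i).mulVecLin = ⊥ := Submodule.finrank_eq_zero.mp h0
    rw [LinearMap.range_eq_bot] at h1
    exact Matrix.toLin'.injective (h1.trans (map_zero Matrix.toLin').symm)
  apply hR.ne_zero 0
  ext a b
  have h2 : ∑ i, R i a b • S i = 0 := by
    ext k l
    simpa [Matrix.sum_apply] using congrFun (congrFun hM (a, k)) (b, l)
  exact Fintype.linearIndependent_iff.mp hS _ h2 0

lemma exists_annihilator (R : Fin 3 → Matrix (Fin 2) (Fin 2) ℂ) :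
    ∃ Y : Matrix (Fin 2) (Fin 2) ℂ, Y ≠ 0 ∧ ∀ i, ∑ a, ∑ b, Y a b * R i a b = 0 := by
  let f : Matrix (Fin 2) (Fin 2) ℂ →ₗ[ℂ] (Fin 3 → ℂ) :=
    { toFun := fun Y i => ∑ a, ∑ b, Y a b * R i a b
      map_add' := by intro Y Z; ext i; simp; ring
      map_smul' := by intro c Y; ext i; simp; ring }
  have hf : LinearMap.ker f ≠ ⊥ := by
    apply LinearMap.ker_ne_bot_of_finrank_lt
    simp [Module.finrank_matrix]
  obtain ⟨Y, hY, hY0⟩ := Submodule.exists_mem_ne_zero_of_ne_bot hf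
  exact ⟨Y, hY0, fun i => congrFun (LinearMap.mem_ker.mp hY) i⟩

lemma exists_det_ne_zero_row (u : Fin 2 → ℂ) (hu : u ≠ 0) :
    ∃ P : Matrix (Fin 2) (Fin 2) ℂ, P.det ≠ 0 ∧ P 1 = u := by
  by_cases h0 : u 0 = 0
  · refine ⟨!![1, 0; u 0, u 1], ?_, ?_⟩
    · intro h
      apply hu
      ext j
      fin_cases j
      · simpa using h0
      · simpa [Matrix.det_fin_two] using h
    · ext j; fin_cases j <;> simp
  · refine ⟨!![0, 1; u 0, u 1], ?_, ?_⟩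
    · simpa [Matrix.det_fin_two] using h0
    · ext j; fin_cases j <;> simp

lemma exists_eq_mul_of_det_eq_zero (Y : Matrix (Fin 2) (Fin 2) ℂ) (hY : Y ≠ 0) (hd : Y.det = 0) :
    ∃ u v : Fin 2 → ℂ, u ≠ 0 ∧ v ≠ 0 ∧ ∀ a b, Y a b = u a * v b := by
  have key : ∃ u v : Fin 2 → ℂ, ∀ a b, Y a b = u a * v b := by
    rw [Matrix.det_fin_two] at hd
    by_cases h0 : Y 0 0 = 0
    · by_cases h1 : Y 0 1 = 0
      · refine ⟨![0, 1], Y 1, fun a b => ?_⟩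
        fin_cases a <;> fin_cases b <;> simp [h0, h1]
      · refine ⟨![1, Y 1 1 / Y 0 1], Y 0, fun a b => ?_⟩
        have h2 : Y 1 0 = 0 := by simpa [h0, h1] using hd
        fin_cases a <;> fin_cases b <;> simp [h0, h1, h2]
    · refine ⟨![1, Y 1 0 / Y 0 0], Y 0, fun a b => ?_⟩
      have h2 : Y 1 1 = Y 1 0 / Y 0 0 * Y 0 1 := by
        field_simp
        linear_combination hd
      fin_cases a <;> fin_cases b <;> simp [h0, h2]
  obtain ⟨u, v, h⟩ := key
  refine ⟨u, v, ?_, ?_, h⟩ <;> rintro rfl <;> apply hY <;> ext a b <;> simp [h]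

/-- The case of symmetric left factors: the partial transpose is the transpose. -/
lemma rank_eq_of_symm {m n : ℕ} (R : Fin 3 → Matrix (Fin 2) (Fin 2) ℂ)
    (S : Fin 3 → Matrix (Fin m) (Fin n) ℂ) (h : ∀ i, (R i)ᵀ = R i) :
    (∑ i, R i ⊗ₖ (S i)ᵀ).rank = (∑ i, R i ⊗ₖ S i).rank := by
  rw [← Matrix.rank_transpose (∑ i, R i ⊗ₖ S i), Matrix.transpose_sum]
  congr 1
  refine Finset.sum_congr rfl fun i _ => ?_
  conv_lhs => rw [← h i]
  exact Matrix.kroneckerMap_transpose _ _ _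

lemma rank_le_two_mul_of_corner_eq_zero {m n : ℕ} (R : Fin 3 → Matrix (Fin 2) (Fin 2) ℂ)
    (S : Fin 3 → Matrix (Fin m) (Fin n) ℂ) (h : ∀ i, R i 1 1 = 0) :
    (∑ i, R i ⊗ₖ (S i)ᵀ).rank ≤ 2 * (∑ i, R i ⊗ₖ S i).rank := by
  set M := ∑ i, R i ⊗ₖ S i with hM
  let T : Fin 2 → Fin 2 → Matrix (Fin m) (Fin n) ℂ := fun a b => ∑ i, R i a b • S i
  have hT : ∀ a b, M.submatrix (fun k => (a, k)) (fun l => (b, l)) = T a b := by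
    intro a b
    ext k l
    simp [hM, T, Matrix.sum_apply]
  have hN : ∑ i, R i ⊗ₖ (S i)ᵀ = Matrix.single (0 : Fin 2) (0 : Fin 2) (1 : ℂ) ⊗ₖ (T 0 0)ᵀ +
      Matrix.single (0 : Fin 2) (1 : Fin 2) (1 : ℂ) ⊗ₖ (T 0 1)ᵀ + Matrix.single (1 : Fin 2) (0 : Fin 2) (1 : ℂ) ⊗ₖ (T 1 0)ᵀ := by
    ext ⟨a, k⟩ ⟨b, l⟩
    fin_cases a <;> fin_cases b <;> simp [T, Matrix.sum_apply, h]
  have hA : (T 0 0).rank ≤ M.rank := by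
    rw [← hT]
    exact Matrix.rank_submatrix_le _ _ _
  have hBC : (T 0 1).rank + (T 1 0).rank ≤ M.rank := by
    rw [← hT, ← hT]
    refine rank_blocks_add_le M fun k l => ?_
    simp [hM, Matrix.sum_apply, h]
  have hE : ∀ a b, (Matrix.single a b (1 : ℂ) ⊗ₖ (T a b)ᵀ).rank ≤ (T a b).rank := fun a b =>
    (rank_single_kronecker_le a b _).trans (Matrix.rank_transpose _).le
  have h1 := rank_add_le_rank_add_rank (Matrix.single (0 : Fin 2) (0 : Fin 2) (1 : ℂ) ⊗ₖ (T 0 0)ᵀ +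
      Matrix.single (0 : Fin 2) (1 : Fin 2) (1 : ℂ) ⊗ₖ (T 0 1)ᵀ) (Matrix.single (1 : Fin 2) (0 : Fin 2) (1 : ℂ) ⊗ₖ (T 1 0)ᵀ)
  have h2 := rank_add_le_rank_add_rank (Matrix.single (0 : Fin 2) (0 : Fin 2) (1 : ℂ) ⊗ₖ (T 0 0)ᵀ)
      (Matrix.single (0 : Fin 2) (1 : Fin 2) (1 : ℂ) ⊗ₖ (T 0 1)ᵀ)
  have h3 := hE 0 0
  have h4 := hE 0 1
  have h5 := hE 1 0
  rw [hN]
  omega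

theorem stmt12 (m₂ n₂ : ℕ) (R : Fin 3 → Matrix (Fin 2) (Fin 2) ℂ)
    (S : Fin 3 → Matrix (Fin m₂) (Fin n₂) ℂ)
    (hR : LinearIndependent ℂ R) (hS : LinearIndependent ℂ S) :
    (∑ i, R i ⊗ₖ (S i)ᵀ).rank < 3 * (∑ i, R i ⊗ₖ S i).rank := by
  have hpos := rank_sum_pos R S hR hS
  obtain ⟨Y, hY0, hY⟩ := exists_annihilator R
  by_cases hd : Y.det = 0
  · obtain ⟨u, v, hu, hv, huv⟩ := exists_eq_mul_of_det_eq_zero Y hY0 hd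
    obtain ⟨P, hP, hPu⟩ := exists_det_ne_zero_row u hu
    obtain ⟨Q, hQ, hQv⟩ := exists_det_ne_zero_row v hv
    have hQ' : Qᵀ.det ≠ 0 := by rwa [Matrix.det_transpose]
    have h := rank_le_two_mul_of_corner_eq_zero (fun i => P * R i * Qᵀ) S (by
      intro i
      have := hY i
      simp only [huv, ← hPu, ← hQv, Fin.sum_univ_two] at this
      simp only [Matrix.mul_apply, Fin.sum_univ_two, Matrix.transpose_apply]
      linear_combination this)
    rw [rank_sum_conj R S P Qᵀ hP hQ', rank_sum_conj R (fun i => (S i)ᵀ) P Qᵀ hP hQ'] at h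
    omega
  -- The matrix `P` is `Yᵀ` times a quarter turn on the left, so that the difference of the two
  -- off-diagonal entries of `P * R i` is the value of the annihilating form at `R i`.
  · let P : Matrix (Fin 2) (Fin 2) ℂ := !![-Y 0 1, -Y 1 1; Y 0 0, Y 1 0]
    have hP : P.det ≠ 0 := by
      intro h
      apply hd
      simp only [P, Matrix.det_fin_two_of] at h
      rw [Matrix.det_fin_two]
      linear_combination h
    have h := rank_eq_of_symm (fun i => P * R i * 1) S (by
      intro i
      have := hY i
      simp only [Fin.sum_univ_two] at this
      ext a b
      fin_cases a <;> fin_cases b <;> simp [P, Matrix.vecMul, dotProduct, Fin.sum_univ_two]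
      · linear_combination this
      · linear_combination -this)
    rw [rank_sum_conj R S P 1 hP (by simp),
      rank_sum_conj R (fun i => (S i)ᵀ) P 1 hP (by simp)] at h
    omega
end

section
/- Let A, C ∈ M_d(ℂ) and B, D ∈ M_f(ℂ), and suppose there exist x, y ∈ ℂ such that xA + yC is invertible. Then there exist an invertible matrix P ∈ M_d(ℂ) and matrices C' ∈ M_d(ℂ) and B', D' ∈ M_f(ℂ) such that (P ⊗ I_f)(A⊗B + C⊗D) = I_d⊗B' + C'⊗D'. -/
/-!
Let `M = x • A + y • C` be invertible and multiply on the left by `M⁻¹ ⊗ 1`. The pencil relation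
becomes `x • M⁻¹A + y • M⁻¹C = 1`, so whichever of `M⁻¹A`, `M⁻¹C` has a nonzero coefficient can be
eliminated in favour of `1` and the other one; bilinearity of `⊗ₖ` then collects the terms.
If `x = y = 0` is the given pair, then `d = 0` and there is nothing to prove.
-/

open Matrix Kronecker

theorem stmt16 (d f : ℕ) (A C : Matrix (Fin d) (Fin d) ℂ) (B D : Matrix (Fin f) (Fin f) ℂ)
    (h : ∃ x y : ℂ, IsUnit (x • A + y • C)) :
    ∃ (P C' : Matrix (Fin d) (Fin d) ℂ) (B' D' : Matrix (Fin f) (Fin f) ℂ),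
      IsUnit P ∧
        (P ⊗ₖ (1 : Matrix (Fin f) (Fin f) ℂ)) * (A ⊗ₖ B + C ⊗ₖ D)
          = (1 : Matrix (Fin d) (Fin d) ℂ) ⊗ₖ B' + C' ⊗ₖ D' := by
  obtain ⟨x, y, hM⟩ := h
  obtain ⟨P, hP, hPM⟩ : ∃ P : Matrix (Fin d) (Fin d) ℂ, IsUnit P ∧ P * (x • A + y • C) = 1 := by
    obtain ⟨u, hu⟩ := hM
    exact ⟨↑u⁻¹, u⁻¹.isUnit, by rw [← hu, Units.inv_mul]⟩
  have key : x • (P * A) + y • (P * C) = 1 := by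
    rw [← hPM, Matrix.mul_add, Matrix.mul_smul, Matrix.mul_smul]
  have expand : (P ⊗ₖ (1 : Matrix (Fin f) (Fin f) ℂ)) * (A ⊗ₖ B + C ⊗ₖ D)
      = (P * A) ⊗ₖ B + (P * C) ⊗ₖ D := by
    rw [Matrix.mul_add, ← mul_kronecker_mul, ← mul_kronecker_mul, Matrix.one_mul, Matrix.one_mul]
  by_cases hx : x = 0
  · by_cases hy : y = 0
    -- Here `0 = 1` in the matrix ring, i.e. `d = 0`, and the tensor identity is `0 = 0`.
    · have h10 : (1 : Matrix (Fin d) (Fin d) ℂ) = 0 := by rw [← key, hx, hy]; simp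
      have hPA : P * A = 0 := by rw [← Matrix.one_mul (P * A), h10, Matrix.zero_mul]
      have hPC : P * C = 0 := by rw [← Matrix.one_mul (P * C), h10, Matrix.zero_mul]
      refine ⟨P, 0, 0, 0, hP, ?_⟩
      rw [expand, hPA, hPC]
      simp
    · refine ⟨P, P * A, y⁻¹ • D, B, hP, ?_⟩
      rw [expand, ← key, hx, zero_smul, zero_add, smul_kronecker, kronecker_smul, smul_smul,
        mul_inv_cancel₀ hy, one_smul, add_comm]
  · refine ⟨P, P * C, x⁻¹ • B, D - (y * x⁻¹) • B, hP, ?_⟩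
    rw [expand, ← key]
    ext ⟨i, k⟩ ⟨j, l⟩
    simp only [Matrix.add_apply, kronecker_apply, Matrix.sub_apply, Matrix.smul_apply, smul_eq_mul]
    field_simp
    ring
end

section
/- Let A, C ∈ M_d(ℂ) and B, D ∈ M_f(ℂ). Suppose there exist x, y ∈ ℂ such that xA + yC is invertible, and there exist u, v ∈ ℂ such that uB + vD is invertible. Then there exist invertible matrices P ∈ M_d(ℂ) and Q ∈ M_f(ℂ) and matrices C' ∈ M_d(ℂ), B' ∈ M_f(ℂ) such that (P ⊗ I_f)(A⊗B + C⊗D)(I_d ⊗ Q) = I_d⊗B' + C'⊗I_f. -/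
/-!
For every scalar `t` one has `A ⊗ B + C ⊗ D = (A + t C) ⊗ B + C ⊗ (D - t B)`. If `A + t C` and
`D - t B` are both invertible, then `P = (A + t C)⁻¹` and `Q = (D - t B)⁻¹` turn the right-hand side
into `I ⊗ (B Q) + (P C) ⊗ I`. Such a `t` exists because each of the two regularity hypotheses makes
the corresponding determinant a nonzero polynomial in `t` (`finite_not_isUnit_add_smul`), so only
finitely many values of `t` are excluded.
-/

open Matrix Kronecker

/-- A regular matrix pencil has only finitely many eigenvalues. -/
lemma finite_not_isUnit_add_smul {n : ℕ} (M N : Matrix (Fin n) (Fin n) ℂ)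
    (h : ∃ x y : ℂ, IsUnit (x • M + y • N)) :
    {t : ℂ | ¬ IsUnit (M + t • N)}.Finite := by
  set p : Polynomial ℂ :=
    det ((Polynomial.X : Polynomial ℂ) • N.map Polynomial.C + M.map Polynomial.C) with hp
  have heval (t : ℂ) : p.eval t = det (M + t • N) := by
    rw [hp, ← Polynomial.coe_evalRingHom, RingHom.map_det]
    congr 1
    ext i j
    simp [add_comm (M i j), mul_comm t]
  have hp0 : p ≠ 0 := by
    obtain ⟨x, y, hu⟩ := h
    rw [Matrix.isUnit_iff_isUnit_det, isUnit_iff_ne_zero] at hu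
    intro h0
    by_cases hx : x = 0
    · -- The coefficient of degree `n` in `p` is `det N`.
      have hc := Polynomial.coeff_det_X_add_C_card N M
      rw [← hp, h0, Polynomial.coeff_zero] at hc
      apply hu
      rw [hx, zero_smul, zero_add, det_smul, ← hc, mul_zero]
    · have he := heval (y / x)
      rw [h0, Polynomial.eval_zero] at he
      apply hu
      have : x • M + y • N = x • (M + (y / x) • N) := by
        rw [smul_add, smul_smul, mul_div_cancel₀ _ hx]
      rw [this, det_smul, ← he, mul_zero]
  refine (Polynomial.finite_setOfPred_isRoot hp0).subset fun t ht => ?_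
  simpa [Matrix.isUnit_iff_isUnit_det, Polynomial.IsRoot, heval] using ht

theorem stmt17 (d f : ℕ) (A C : Matrix (Fin d) (Fin d) ℂ) (B D : Matrix (Fin f) (Fin f) ℂ)
    (h₁ : ∃ x y : ℂ, IsUnit (x • A + y • C))
    (h₂ : ∃ u v : ℂ, IsUnit (u • B + v • D)) :
    ∃ (P : Matrix (Fin d) (Fin d) ℂ) (Q : Matrix (Fin f) (Fin f) ℂ)
      (C' : Matrix (Fin d) (Fin d) ℂ) (B' : Matrix (Fin f) (Fin f) ℂ),
      IsUnit P ∧ IsUnit Q ∧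
        (P ⊗ₖ (1 : Matrix (Fin f) (Fin f) ℂ)) * (A ⊗ₖ B + C ⊗ₖ D) *
            ((1 : Matrix (Fin d) (Fin d) ℂ) ⊗ₖ Q)
          = (1 : Matrix (Fin d) (Fin d) ℂ) ⊗ₖ B' + C' ⊗ₖ (1 : Matrix (Fin f) (Fin f) ℂ) := by
  have h₂' : ∃ x y : ℂ, IsUnit (x • D + y • (-B)) := by
    obtain ⟨u, v, h⟩ := h₂
    exact ⟨v, -u, by simpa [add_comm] using h⟩
  obtain ⟨t, ht⟩ := ((finite_not_isUnit_add_smul A C h₁).union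
    (finite_not_isUnit_add_smul D (-B) h₂')).exists_notMem
  simp only [Set.mem_union, Set.mem_ofPred_eq, not_or, not_not] at ht
  obtain ⟨hE, hF⟩ := ht
  have key : A ⊗ₖ B + C ⊗ₖ D = (A + t • C) ⊗ₖ B + C ⊗ₖ (D + t • (-B)) := by
    ext ⟨i, k⟩ ⟨j, l⟩
    simp only [Matrix.add_apply, kroneckerMap_apply, Matrix.smul_apply, Matrix.neg_apply,
      smul_eq_mul]
    ring
  refine ⟨(A + t • C)⁻¹, (D + t • (-B))⁻¹, (A + t • C)⁻¹ * C, B * (D + t • (-B))⁻¹,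
    (isUnit_nonsing_inv_iff).2 hE, (isUnit_nonsing_inv_iff).2 hF, ?_⟩
  rw [key, mul_add, add_mul]
  simp only [← mul_kronecker_mul, one_mul, mul_one]
  rw [nonsing_inv_mul _ ((isUnit_iff_isUnit_det _).1 hE),
    mul_nonsing_inv _ ((isUnit_iff_isUnit_det _).1 hF)]
end

section
/- Let A, C ∈ M_d(ℂ) be simultaneously diagonalizable: there exists an invertible P ∈ M_d(ℂ) with P⁻¹AP = diag(a₁,…,a_d) and P⁻¹CP = diag(c₁,…,c_d). Then for all B, D ∈ M_f(ℂ), rank(A⊗B + C⊗D) = Σ_{j=1}^d rank(aⱼB + cⱼD). -/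
/-!
Conjugating by `P ⊗ 1` turns `A ⊗ B + C ⊗ D` into `diag(a) ⊗ B + diag(c) ⊗ D`, which is block
diagonal with blocks `a j • B + c j • D`. Conjugation preserves rank, and the rank of a block
diagonal matrix is the sum of the ranks of its blocks (`rank_blockDiagonal_eq_sum`), because its
range is the direct product of the ranges of the blocks.
-/

open Matrix Kronecker

/-- The range of a block diagonal matrix is the injective image of the product of the ranges of its
blocks, under the identification of families of vectors with vectors on the product index set. -/
theorem rank_blockDiagonal_eq_sum {K m n : Type*} [Field K] [Fintype m] [DecidableEq m]
    [Fintype n] (N : m → Matrix n n K) :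
    (blockDiagonal N).rank = ∑ j, (N j).rank := by
  let g : ((j : m) → LinearMap.range (N j).mulVecLin) →ₗ[K] (n × m → K) :=
    { toFun := fun v p => (v p.2 : n → K) p.1
      map_add' := fun _ _ => rfl
      map_smul' := fun _ _ => rfl }
  have hg : Function.Injective g := by
    intro v w h
    funext j
    ext k
    exact congrFun h (k, j)
  have hmul (x : n × m → K) (p : n × m) :
      (blockDiagonal N *ᵥ x) p = (N p.2 *ᵥ fun l => x (l, p.2)) p.1 := by
    simp [mulVec, dotProduct, blockDiagonal_apply, Fintype.sum_prod_type, ite_mul]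
  have hr : LinearMap.range (blockDiagonal N).mulVecLin = LinearMap.range g := by
    ext y
    constructor
    · rintro ⟨x, rfl⟩
      refine ⟨fun j => ⟨N j *ᵥ fun l => x (l, j), ⟨_, rfl⟩⟩, ?_⟩
      funext p
      exact (hmul x p).symm
    · rintro ⟨v, rfl⟩
      choose u hu using fun j => (v j).2
      refine ⟨fun p => u p.2 p.1, ?_⟩
      funext p
      exact (hmul _ p).trans (congrFun (hu p.2) p.1)
  rw [Matrix.rank, hr, LinearMap.finrank_range_of_inj hg, Module.finrank_pi_fintype]
  rfl

theorem stmt18 (d f : ℕ) (A C : Matrix (Fin d) (Fin d) ℂ)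
    (P : Matrix (Fin d) (Fin d) ℂ) (hP : IsUnit P)
    (a c : Fin d → ℂ)
    (hA : P⁻¹ * A * P = Matrix.diagonal a)
    (hC : P⁻¹ * C * P = Matrix.diagonal c)
    (B D : Matrix (Fin f) (Fin f) ℂ) :
    (A ⊗ₖ B + C ⊗ₖ D).rank = ∑ j, (a j • B + c j • D).rank := by
  have hdet : IsUnit P.det := (isUnit_iff_isUnit_det P).1 hP
  have hQ : IsUnit (P ⊗ₖ (1 : Matrix (Fin f) (Fin f) ℂ)).det := by
    rw [det_kronecker]
    simpa using hdet.pow f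
  have hQ' : IsUnit (P⁻¹ ⊗ₖ (1 : Matrix (Fin f) (Fin f) ℂ)).det := by
    rw [det_kronecker]
    simpa using (isUnit_nonsing_inv_det P hdet).pow f
  have hconj : P⁻¹ ⊗ₖ (1 : Matrix (Fin f) (Fin f) ℂ) * (A ⊗ₖ B + C ⊗ₖ D) * P ⊗ₖ 1 =
      (blockDiagonal fun j => a j • B + c j • D).submatrix
        (Equiv.prodComm _ _) (Equiv.prodComm _ _) := by
    simp only [mul_add, add_mul, ← mul_kronecker_mul, hA, hC, one_mul, mul_one]
    ext ⟨i, k⟩ ⟨j, l⟩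
    by_cases h : i = j <;> simp [blockDiagonal_apply, h]
  rw [← rank_blockDiagonal_eq_sum, ← rank_submatrix (blockDiagonal _)
      (Equiv.prodComm (Fin d) (Fin f)) (Equiv.prodComm (Fin d) (Fin f)),
    ← hconj, rank_mul_eq_left_of_isUnit_det _ _ hQ, rank_mul_eq_right_of_isUnit_det _ _ hQ']
end
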